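/- arXiv:quant-ph/0407227 — 3 statements merged into one kernel-verified Lean document; each statement's English description precedes it below -/
import Mathlib

section
/- Let P be a probability distribution on {0,1}^n with marginals P_B = M_{N∖B} P, and let A ⊆ N = {1,…,n} have an odd number of elements. For x ∈ {0,1}^n let x′ denote x with the coordinates indexed by A flipped. Then Σ_{B ⊊ N, A∪B = N} (−1)^{|A∩B|} P_B(x) = P(x) + P(x′) (where the term with B = ∅, which occurs only when A = N, uses P_∅ ≡ the constant function 1). In particular 0 ≤ Σ_{B ⊊ N, A∪B = N} (−1)^{|A∩B|} P_B(x) ≤ 1. -/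
/-- Flip the coordinates of `x ∈ {0,1}ⁿ` indexed by `A`. -/
def flipOn {n : ℕ} (A : Finset (Fin n)) (x : Fin n → Bool) : Fin n → Bool :=
  fun i => if i ∈ A then !(x i) else x i

/-- The bit-flip operator `κ_A`, the composite of the `κ_i` over `i ∈ A`:
`(κ_A f)(x) = f(x with coordinates in A flipped)`. -/
def kop {n : ℕ} (A : Finset (Fin n)) (f : (Fin n → Bool) → ℝ) : (Fin n → Bool) → ℝ :=
  fun x => f (flipOn A x)

/-- The operator `M_A`, the composite of the commuting operators
`(M_i f)(x) = f(x) + f(x with i-th coordinate flipped)` over `i ∈ A`;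
equivalently `(M_A f)(x) = Σ_{B ⊆ A} f(x with coordinates in B flipped)`. -/
def Mop {n : ℕ} (A : Finset (Fin n)) (f : (Fin n → Bool) → ℝ) : (Fin n → Bool) → ℝ :=
  fun x => ∑ B ∈ A.powerset, f (flipOn B x)

/-- A probability distribution on the subset `A ⊆ N` of the binary variables:
a nonnegative function on `{0,1}ⁿ`, constant in the coordinates outside `A`,
with `M_A P_A` the constant function 1. -/
def IsDistOn {n : ℕ} (A : Finset (Fin n)) (f : (Fin n → Bool) → ℝ) : Prop :=
  (∀ x, 0 ≤ f x) ∧ (∀ i, i ∉ A → kop {i} f = f) ∧ Mop A f = fun _ => (1 : ℝ)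

/-- A family `(P_A)_{A ⊊ N}` of distributions on the proper subsets of `N` is
equimarginal if `M_{B∖A} P_B = M_{C∖A} P_C` whenever `A ⊆ B ∩ C` with `B, C ⊊ N`. -/
def Equimarginal {n : ℕ} (P : Finset (Fin n) → (Fin n → Bool) → ℝ) : Prop :=
  ∀ A B C : Finset (Fin n), B ⊂ Finset.univ → C ⊂ Finset.univ → A ⊆ B → A ⊆ C →
    Mop (B \ A) (P B) = Mop (C \ A) (P C)

/-- The sign function `σ_A(x) = Π_{i∈A} (-1)^{x_i}`. -/
def sigmaFn {n : ℕ} (A : Finset (Fin n)) (x : Fin n → Bool) : ℝ :=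
  ∏ i ∈ A, (if x i then (-1 : ℝ) else 1)

/-!
Since `M_i = 1 + κ_i`, the composite of the operators `M_i - 1` over `i ∈ A` is `κ_A`. Expanding it
gives `κ_A = ∑_{E ⊆ A} (-1)^{|E|} M_{A ∖ E}`, Möbius inversion on the subsets of `A` since
`M_C = ∑_{D ⊆ C} κ_D`. The bijection `B ↦ A ∩ B` turns the sum over `A ∪ B = N` into this expansion.
The excluded term `B = N` is `(-1)^{|A|} P = -P` for odd `|A|`, so the sum over `B ⊊ N` equals
`κ_A P + P`.
-/

section Powerset

open Finset

variable {α : Type*} [DecidableEq α]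

theorem sum_powerset_neg_one_pow_card_smul_sum_powerset_sdiff {G : Type*} [AddCommGroup G]
    (A : Finset α) (f : Finset α → G) :
    ∑ E ∈ A.powerset, (-1 : ℤ) ^ #E • ∑ D ∈ (A \ E).powerset, f D = f A := by
  calc ∑ E ∈ A.powerset, (-1 : ℤ) ^ #E • ∑ D ∈ (A \ E).powerset, f D
      = ∑ D ∈ A.powerset, (∑ E ∈ (A \ D).powerset, (-1 : ℤ) ^ #E) • f D := by
        simp only [smul_sum, sum_smul]
        refine sum_comm' fun E D => ?_
        simp only [mem_powerset, subset_sdiff, disjoint_comm (a := D)]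
        tauto
    _ = (∑ E ∈ (A \ A).powerset, (-1 : ℤ) ^ #E) • f A := by
        refine sum_eq_single_of_mem A (mem_powerset_self A) fun D hD hne => ?_
        have hDA : D ⊂ A := (mem_powerset.1 hD).ssubset_of_ne hne
        rw [sum_powerset_neg_one_pow_card_of_nonempty (sdiff_nonempty.2 hDA.not_subset), zero_smul]
    _ = f A := by simp

theorem sum_filter_union_eq_univ_inter [Fintype α] {M : Type*} [AddCommMonoid M]
    (A : Finset α) (g : Finset α → M) :
    ∑ B with A ∪ B = univ, g (A ∩ B) = ∑ E ∈ A.powerset, g E := by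
  refine sum_nbij' (A ∩ ·) (Aᶜ ∪ ·) (fun B _ => mem_powerset.2 inter_subset_left)
    (fun E _ => by simp [← union_assoc]) (fun B hB => ?_) (fun E hE => ?_) fun _ _ => rfl
  · have hAB : Aᶜ ⊆ B := codisjoint_iff_compl_le_right.1 (codisjoint_iff.2 (mem_filter.1 hB).2)
    rw [union_inter_distrib_left, union_comm, union_compl, univ_inter, union_eq_right.2 hAB]
  · rw [inter_union_distrib_left, inter_compl, empty_union, inter_eq_right.2 (mem_powerset.1 hE)]

end Powerset

section BitFlip

open Finset

variable {n : ℕ}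

@[simp]
theorem flipOn_empty (x : Fin n → Bool) : flipOn ∅ x = x := by
  ext i
  simp [flipOn]

theorem flipOn_ne_self {A : Finset (Fin n)} (hA : A.Nonempty) (x : Fin n → Bool) :
    flipOn A x ≠ x := by
  obtain ⟨i, hi⟩ := hA
  exact fun h => by simpa [flipOn, hi] using congrFun h i

theorem Mop_empty (f : (Fin n → Bool) → ℝ) : Mop ∅ f = f := by
  ext x
  simp [Mop]

theorem sum_powerset_neg_one_pow_card_mul_Mop_sdiff (A : Finset (Fin n))
    (f : (Fin n → Bool) → ℝ) (x : Fin n → Bool) :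
    ∑ E ∈ A.powerset, (-1 : ℝ) ^ #E * Mop (A \ E) f x = kop A f x := by
  simpa [Mop, kop] using
    sum_powerset_neg_one_pow_card_smul_sum_powerset_sdiff A fun D => f (flipOn D x)

theorem sum_neg_one_pow_card_inter_mul_Mop_sdiff (A : Finset (Fin n))
    (f : (Fin n → Bool) → ℝ) (x : Fin n → Bool) :
    ∑ B with A ∪ B = univ, (-1 : ℝ) ^ #(A ∩ B) * Mop (univ \ B) f x = kop A f x := by
  rw [← sum_powerset_neg_one_pow_card_mul_Mop_sdiff, ← sum_filter_union_eq_univ_inter]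
  refine sum_congr rfl fun B hB => ?_
  have hcompl : univ \ B = A \ (A ∩ B) := by grind
  rw [hcompl]

theorem sum_ssubset_neg_one_pow_card_inter_mul_Mop_sdiff (A : Finset (Fin n))
    (f : (Fin n → Bool) → ℝ) (x : Fin n → Bool) :
    ∑ B with B ⊂ univ ∧ A ∪ B = univ, (-1 : ℝ) ^ #(A ∩ B) * Mop (univ \ B) f x
      = kop A f x - (-1) ^ #A * f x := by
  have herase : ({B | B ⊂ univ ∧ A ∪ B = univ} : Finset (Finset (Fin n)))
      = ({B | A ∪ B = univ} : Finset _).erase univ := by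
    ext B
    simp [ssubset_univ_iff]
  have huniv : univ ∈ ({B | A ∪ B = univ} : Finset (Finset (Fin n))) := by simp
  rw [herase, sum_erase_eq_sub huniv, sum_neg_one_pow_card_inter_mul_Mop_sdiff, inter_univ,
    Finset.sdiff_self, Mop_empty]

end BitFlip

/-- For a probability distribution `P` on `{0,1}ⁿ` with marginals
`P_B = M_{N∖B} P` and a subset `A ⊆ N` with an odd number of elements,
`Σ_{B ⊊ N, A∪B = N} (-1)^{|A∩B|} P_B(x) = P(x) + P(x')`, where `x'` is `x` with the
coordinates in `A` flipped (the term with `B = ∅` uses `P_∅ ≡ 1`, which is exactly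
`M_N P`); in particular the sum lies in `[0,1]`. -/
theorem stmt_4 (n : ℕ) (P : (Fin n → Bool) → ℝ)
    (hnn : ∀ x, 0 ≤ P x) (hsum : ∑ x : Fin n → Bool, P x = 1)
    (A : Finset (Fin n)) (hA : Odd A.card) (x : Fin n → Bool) :
    (∑ B ∈ Finset.univ.filter
          (fun B : Finset (Fin n) => B ⊂ Finset.univ ∧ A ∪ B = Finset.univ),
        (-1 : ℝ) ^ (A ∩ B).card * Mop (Finset.univ \ B) P x)
      = P x + P (flipOn A x) ∧
    0 ≤ (∑ B ∈ Finset.univ.filter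
          (fun B : Finset (Fin n) => B ⊂ Finset.univ ∧ A ∪ B = Finset.univ),
        (-1 : ℝ) ^ (A ∩ B).card * Mop (Finset.univ \ B) P x) ∧
    (∑ B ∈ Finset.univ.filter
          (fun B : Finset (Fin n) => B ⊂ Finset.univ ∧ A ∪ B = Finset.univ),
        (-1 : ℝ) ^ (A ∩ B).card * Mop (Finset.univ \ B) P x) ≤ 1 := by
  have hpair : P x + P (flipOn A x) ≤ 1 :=
    hsum ▸ Finset.add_le_sum (fun y _ => hnn y) (Finset.mem_univ x) (Finset.mem_univ _)
      (flipOn_ne_self (Finset.card_pos.1 hA.pos) x).symm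
  rw [sum_ssubset_neg_one_pow_card_inter_mul_Mop_sdiff, hA.neg_one_pow, neg_one_mul, sub_neg_eq_add,
    add_comm, kop]
  exact ⟨rfl, add_nonneg (hnn _) (hnn _), hpair⟩
end

section
/- Let P be a probability distribution on {0,1}^n, and for B ⊆ N = {1,…,n} define the coefficient c_B = 2^{−n} Σ_{y ∈ {0,1}^n} P(y) σ_B(y), so that P = Σ_{B ⊆ N} c_B σ_B. Then for every A ⊆ N and every x ∈ {0,1}^n, c_A σ_A(x) = Σ_{B ⊆ A} (−1)^{|A|−|B|} 2^{|B|−n} P_B(x), where P_B = M_{N∖B} P is the marginal of P over B (with P_∅ ≡ the constant function 1). -/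
/-!
Summing over the words `y ∈ {0,1}ⁿ` is summing over the sets `C` of coordinates in which `y` differs
from a fixed `x`. Expanded in the values `f (flipOn C x)`, the left-hand side has coefficients
`(-1)^|A ∩ C|`, while `M_{N∖B} f (x)` contributes exactly those `C` that are disjoint from `B`. The
claim is thus the binomial identity `∑_{B ⊆ A∖C} 2^|B| (-1)^(|A|-|B|) = (2 - 1)^|A∖C| (-1)^|A ∩ C|`.
-/

open Finset

section BinomialSum

variable {α R : Type*} [DecidableEq α] [CommSemiring R]

theorem sum_powerset_pow_mul_pow_card_sub {s t : Finset α} (hst : s ⊆ t) (a b : R) :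
    ∑ u ∈ s.powerset, a ^ #u * b ^ (#t - #u) = (a + b) ^ #s * b ^ #(t \ s) := by
  rw [← sum_pow_mul_eq_add_pow, sum_mul]
  refine sum_congr rfl fun u hu => ?_
  have hus : #u ≤ #s := card_le_card (mem_powerset.1 hu)
  have hcard : #t - #u = (#s - #u) + #(t \ s) := by
    have := card_sdiff_add_card_eq_card hst
    omega
  rw [hcard, pow_add, mul_assoc]

end BinomialSum

section BooleanCube

variable {n : ℕ}

theorem flipOn_bijective (x : Fin n → Bool) :
    Function.Bijective fun C : Finset (Fin n) => flipOn C x := by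
  refine Function.bijective_iff_has_inverse.2
    ⟨fun y => {i | y i ≠ x i}, fun C => ?_, fun y => ?_⟩
  · ext i
    by_cases hi : i ∈ C <;> simp [flipOn, hi]
  · funext i
    cases hy : y i <;> cases hx : x i <;> simp [flipOn, hy, hx]

theorem sum_flipOn {M : Type*} [AddCommMonoid M] (x : Fin n → Bool) (f : (Fin n → Bool) → M) :
    ∑ C : Finset (Fin n), f (flipOn C x) = ∑ y, f y :=
  (flipOn_bijective x).sum_comp f

theorem sigmaFn_mul_self (A : Finset (Fin n)) (x : Fin n → Bool) :
    sigmaFn A x * sigmaFn A x = 1 := by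
  rw [sigmaFn, ← prod_mul_distrib]
  refine prod_eq_one fun i _ => ?_
  split_ifs <;> norm_num

theorem sigmaFn_flipOn (A C : Finset (Fin n)) (x : Fin n → Bool) :
    sigmaFn A (flipOn C x) = (-1) ^ #(A ∩ C) * sigmaFn A x := by
  have hsign : (-1 : ℝ) ^ #(A ∩ C) = ∏ i ∈ A, if i ∈ C then (-1 : ℝ) else 1 := by
    rw [prod_ite_mem, prod_const]
  rw [hsign, sigmaFn, sigmaFn, ← prod_mul_distrib]
  refine prod_congr rfl fun i _ => ?_
  by_cases hi : i ∈ C <;> cases hx : x i <;> simp [flipOn, hi, hx]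

theorem sum_mul_sigmaFn_mul_sigmaFn (f : (Fin n → Bool) → ℝ) (A : Finset (Fin n))
    (x : Fin n → Bool) :
    (∑ y, f y * sigmaFn A y) * sigmaFn A x = ∑ C, (-1) ^ #(A ∩ C) * f (flipOn C x) := by
  rw [← sum_flipOn x, sum_mul]
  refine sum_congr rfl fun C _ => ?_
  rw [sigmaFn_flipOn]
  linear_combination ((-1) ^ #(A ∩ C) * f (flipOn C x)) * sigmaFn_mul_self A x

theorem sum_powerset_mul_mop_univ_sdiff (f : (Fin n → Bool) → ℝ) (A : Finset (Fin n))
    (x : Fin n → Bool) (a b : ℝ) :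
    ∑ B ∈ A.powerset, a ^ #B * b ^ (#A - #B) * Mop (univ \ B) f x
      = ∑ C, (a + b) ^ #(A \ C) * b ^ #(A ∩ C) * f (flipOn C x) := by
  have hswap (B C : Finset (Fin n)) :
      B ∈ A.powerset ∧ C ∈ (univ \ B).powerset ↔ B ∈ (A \ C).powerset ∧ C ∈ univ := by
    simp only [mem_powerset, subset_sdiff, subset_univ, mem_univ, true_and, and_true,
      disjoint_comm]
  simp_rw [Mop, mul_sum]
  rw [sum_comm' hswap]
  refine sum_congr rfl fun C _ => ?_
  rw [← sum_mul, sum_powerset_pow_mul_pow_card_sub sdiff_subset, sdiff_sdiff_self_left]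

theorem stmt_6_general (f : (Fin n → Bool) → ℝ) (A : Finset (Fin n)) (x : Fin n → Bool) :
    ((∑ y, f y * sigmaFn A y) / 2 ^ n) * sigmaFn A x
      = ∑ B ∈ A.powerset, (-1) ^ (#A - #B) * (2 ^ #B / 2 ^ n) * Mop (univ \ B) f x := by
  calc ((∑ y, f y * sigmaFn A y) / 2 ^ n) * sigmaFn A x
      = (∑ C, (-1) ^ #(A ∩ C) * f (flipOn C x)) / 2 ^ n := by
        rw [div_mul_eq_mul_div, sum_mul_sigmaFn_mul_sigmaFn]
    _ = (∑ C, (2 + -1) ^ #(A \ C) * (-1) ^ #(A ∩ C) * f (flipOn C x)) / 2 ^ n := by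
        norm_num
    _ = (∑ B ∈ A.powerset, 2 ^ #B * (-1) ^ (#A - #B) * Mop (univ \ B) f x) / 2 ^ n := by
        rw [sum_powerset_mul_mop_univ_sdiff]
    _ = ∑ B ∈ A.powerset, (-1) ^ (#A - #B) * (2 ^ #B / 2 ^ n) * Mop (univ \ B) f x := by
        rw [sum_div]
        exact sum_congr rfl fun B _ => by ring

end BooleanCube

/-- For a probability distribution `P` on `{0,1}ⁿ` with Fourier
coefficients `c_B = 2⁻ⁿ Σ_y P(y) σ_B(y)` (so that `P = Σ_B c_B σ_B`), one has for every
`A ⊆ N` and every `x`: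
`c_A σ_A(x) = Σ_{B ⊆ A} (-1)^{|A|-|B|} 2^{|B|-n} P_B(x)`,
where `P_B = M_{N∖B} P` is the marginal of `P` over `B` (with `P_∅ ≡ 1 = M_N P`). -/
theorem stmt_6 (n : ℕ) (P : (Fin n → Bool) → ℝ)
    (hnn : ∀ x, 0 ≤ P x) (hsum : ∑ x : Fin n → Bool, P x = 1)
    (A : Finset (Fin n)) (x : Fin n → Bool) :
    ((∑ y : Fin n → Bool, P y * sigmaFn A y) / 2 ^ n) * sigmaFn A x
      = ∑ B ∈ A.powerset,
          (-1 : ℝ) ^ (A.card - B.card) * (2 ^ B.card / 2 ^ n) *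
            Mop (Finset.univ \ B) P x :=
  stmt_6_general P A x
end

section
/- Let ρ be a three-qubit density matrix (positive semidefinite 8×8 complex matrix of trace 1, indexed by {0,1}^3), with one- and two-qubit reduced states ρ_1, ρ_2, ρ_3, ρ_{12}, ρ_{13}, ρ_{23} viewed as operators on ℂ^8, and let Δ = 1 − ρ_1 − ρ_2 − ρ_3 + ρ_{12} + ρ_{13} + ρ_{23}. Let τ : ℂ^8 → ℂ^8 be the antiunitary map (τc)_{αβγ} = (−1)^{α+β+γ} · conj(c_{1−α, 1−β, 1−γ}). Then for every Ψ ∈ ℂ^8, ⟨Ψ, ΔΨ⟩ = ⟨Ψ, ρΨ⟩ + ⟨τΨ, ρ(τΨ)⟩. -/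
open scoped Matrix ComplexOrder

/-- The reduced state `ρ_A` of an `n`-qubit state `ρ`, viewed as an operator on
`(ℂ²)^{⊗n}`: `ρ_A[x,y] = (Π_{j∉A} δ_{x_j,y_j}) · Σ_w ρ[u(x,w), u(y,w)]`, where `w`
ranges over assignments of values to the coordinates outside `A` and `u(x,w)` agrees
with `x` on `A` and with `w` outside `A`. -/
noncomputable def qreduce {n : ℕ} (A : Finset (Fin n))
    (ρ : Matrix (Fin n → Bool) (Fin n → Bool) ℂ) :
    Matrix (Fin n → Bool) (Fin n → Bool) ℂ :=
  Matrix.of fun x y =>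
    (if ∀ j, j ∉ A → x j = y j then (1 : ℂ) else 0) *
      ∑ w ∈ Finset.univ.filter (fun w : Fin n → Bool => ∀ i, i ∈ A → w i = x i),
        ρ w (fun i => if i ∈ A then y i else w i)

/-- The three-qubit "universal NOT" map
`(τc)_{αβγ} = (-1)^{α+β+γ} conj(c_{ᾱβ̄γ̄})`. -/
noncomputable def tau3 (c : (Fin 3 → Bool) → ℂ) : (Fin 3 → Bool) → ℂ :=
  fun x =>
    (-1 : ℂ) ^ (((if x 0 then 1 else 0) + (if x 1 then 1 else 0) + (if x 2 then 1 else 0) : ℕ)) *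
      (starRingEnd ℂ) (c fun i => !(x i))

/-!
For one qubit, `(tr M) 1 - M = σ_y Mᵀ σ_y`: taking the trace minus keeping the state is the spin
flip. Tensoring this identity over all qubits and expanding the product over the set `A` of qubits
which are kept gives `∑ A, (-1)^|A| ρ_A = σ_y^{⊗n} ρᵀ σ_y^{⊗n}`, whose quadratic form at `Ψ` is
`⟨τΨ, ρ τΨ⟩`. For three qubits the term `A = {1, 2, 3}` is `-ρ`, and the others add up to `Δ`.
-/

section SpinFlip

variable {ι R : Type*} [Fintype ι] [CommRing R]

/-- The sign `(-1)^{x_1 + ⋯ + x_n}` of a computational basis vector, with `true` read as `1`. -/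
def basisSign (x : ι → Bool) : R :=
  (-1) ^ ∑ i, if x i then 1 else 0

lemma basisSign_eq_prod (x : ι → Bool) :
    (basisSign x : R) = ∏ i, (-1) ^ (if x i then 1 else 0) :=
  (Finset.prod_pow_eq_pow_sum _ _ _).symm

lemma basisSign_compl_mul_basisSign_compl (x y : ι → Bool) :
    (basisSign xᶜ * basisSign yᶜ : R) = basisSign x * basisSign y := by
  simp only [basisSign_eq_prod, ← Finset.prod_mul_distrib, Pi.compl_apply]
  refine Finset.prod_congr rfl fun i _ => ?_
  by_cases hx : x i <;> by_cases hy : y i <;> simp [hx, hy]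

/-- The spin flip `σ_y^{⊗n} Mᵀ σ_y^{⊗n}` of an operator on `n` qubits, written out in the
computational basis. -/
def spinFlipMatrix (M : Matrix (ι → Bool) (ι → Bool) R) : Matrix (ι → Bool) (ι → Bool) R :=
  Matrix.of fun x y => basisSign x * basisSign y * M yᶜ xᶜ

variable [StarRing R]

lemma star_basisSign (x : ι → Bool) : star (basisSign x : R) = basisSign x := by
  simp only [basisSign, star_pow, star_neg, star_one]

/-- The antiunitary universal NOT map `τ` on `n` qubits, of which `tau3` is the case `n = 3`. -/
def universalNot (c : (ι → Bool) → R) : (ι → Bool) → R :=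
  fun x => basisSign x * star (c xᶜ)

lemma star_universalNot_dotProduct_mulVec [DecidableEq ι] (M : Matrix (ι → Bool) (ι → Bool) R)
    (Φ Ψ : (ι → Bool) → R) :
    star (universalNot Ψ) ⬝ᵥ M *ᵥ universalNot Φ = star Φ ⬝ᵥ spinFlipMatrix M *ᵥ Ψ := by
  simp only [dotProduct, Matrix.mulVec, Finset.mul_sum, Pi.star_apply]
  rw [Finset.sum_comm, ← compl_bijective.sum_comp]
  refine Finset.sum_congr rfl fun x _ => ?_
  rw [← compl_bijective.sum_comp]
  refine Finset.sum_congr rfl fun y _ => ?_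
  simp only [universalNot, spinFlipMatrix, Matrix.of_apply, star_mul', star_basisSign, star_star,
    compl_compl, ← basisSign_compl_mul_basisSign_compl x y]
  ring

end SpinFlip

lemma tau3_eq_universalNot (c : (Fin 3 → Bool) → ℂ) : tau3 c = universalNot c := by
  funext x
  simp only [tau3, universalNot, basisSign, Fin.sum_univ_three, starRingEnd_apply]
  rfl

section OneQubit

variable {R : Type*} [CommRing R]

/-- The coefficient of `M p q` in the `(a, b)` entry of `(tr M) 1`, for a one-qubit operator `M`. -/
def traceOutCoeff (a b p q : Bool) : R := if a = b ∧ p = q then 1 else 0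

/-- The coefficient of `M p q` in the `(a, b)` entry of `M`, for a one-qubit operator `M`. -/
def keepCoeff (a b p q : Bool) : R := if p = a ∧ q = b then 1 else 0

/-- `(tr M) 1 - M = σ_y Mᵀ σ_y`, coefficient by coefficient. -/
lemma traceOutCoeff_sub_keepCoeff (a b p q : Bool) :
    (traceOutCoeff a b p q - keepCoeff a b p q : R) =
      (-1) ^ (if a then 1 else 0) * (-1) ^ (if b then 1 else 0) *
        if p = !b ∧ q = !a then 1 else 0 := by
  cases a <;> cases b <;> cases p <;> cases q <;> simp [traceOutCoeff, keepCoeff]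

end OneQubit

section Marginals

variable {ι R : Type*} [Fintype ι] [CommRing R]

lemma prod_traceOutCoeff_mul_prod_keepCoeff [DecidableEq ι] (A : Finset ι) (x y w v : ι → Bool) :
    ((∏ i ∈ Aᶜ, traceOutCoeff (x i) (y i) (w i) (v i)) *
        ∏ i ∈ A, keepCoeff (x i) (y i) (w i) (v i) : R) =
      if (∀ i, i ∉ A → x i = y i) ∧ (∀ i, i ∈ A → w i = x i) ∧
        v = (fun i => if i ∈ A then y i else w i) then 1 else 0 := by
  simp only [traceOutCoeff, keepCoeff, Finset.prod_boole, ite_zero_mul_ite_zero, mul_one,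
    Finset.mem_compl]
  refine if_congr ?_ rfl rfl
  rw [funext_iff]
  grind

lemma prod_traceOutCoeff_sub_keepCoeff (x y w v : ι → Bool) :
    (∏ i, (traceOutCoeff (x i) (y i) (w i) (v i) - keepCoeff (x i) (y i) (w i) (v i)) : R) =
      basisSign x * basisSign y * if w = yᶜ ∧ v = xᶜ then 1 else 0 := by
  simp only [traceOutCoeff_sub_keepCoeff, Finset.prod_mul_distrib, ← basisSign_eq_prod,
    Fintype.prod_boole, forall_and, funext_iff]
  rfl

end Marginals

section Qubits

variable {n : ℕ} (ρ : Matrix (Fin n → Bool) (Fin n → Bool) ℂ)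

lemma qreduce_apply_eq_sum (A : Finset (Fin n)) (x y : Fin n → Bool) :
    qreduce A ρ x y = ∑ w, ∑ v,
      ((∏ i ∈ Aᶜ, traceOutCoeff (x i) (y i) (w i) (v i)) *
        ∏ i ∈ A, keepCoeff (x i) (y i) (w i) (v i)) * ρ w v := by
  simp only [prod_traceOutCoeff_mul_prod_keepCoeff, ite_and, ite_mul, one_mul, zero_mul,
    qreduce, Matrix.of_apply, Finset.sum_filter]
  split_ifs <;> simp

theorem sum_neg_one_pow_card_smul_qreduce :
    ∑ A, (-1 : ℂ) ^ A.card • qreduce A ρ = spinFlipMatrix ρ := by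
  ext x y
  calc (∑ A, (-1 : ℂ) ^ A.card • qreduce A ρ) x y
    _ = ∑ w, ∑ v, (∏ i, (traceOutCoeff (x i) (y i) (w i) (v i) -
          keepCoeff (x i) (y i) (w i) (v i))) * ρ w v := by
      simp only [Matrix.sum_apply, Matrix.smul_apply, smul_eq_mul, qreduce_apply_eq_sum,
        Finset.mul_sum, Finset.prod_sub, Finset.powerset_univ, ← Finset.compl_eq_univ_sdiff,
        Finset.sum_mul, mul_assoc]
      rw [Finset.sum_comm]
      exact Finset.sum_congr rfl fun w _ => Finset.sum_comm
    _ = spinFlipMatrix ρ x y := by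
      simp [prod_traceOutCoeff_sub_keepCoeff, spinFlipMatrix, ite_and]

@[simp]
lemma qreduce_empty : qreduce ∅ ρ = ρ.trace • 1 := by
  ext x y
  simp [qreduce, Matrix.trace, Matrix.one_apply, funext_iff]

@[simp]
lemma qreduce_univ : qreduce Finset.univ ρ = ρ := by
  ext x y
  simp [qreduce, ← funext_iff, Finset.filter_eq']

/-- The alternating sum of the reduced states on proper subsets of the qubits, which for `n = 3`
and `ρ.trace = 1` is the operator `Δ`. -/
noncomputable def properMarginalSum : Matrix (Fin n → Bool) (Fin n → Bool) ℂ :=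
  ∑ A ∈ Finset.univ.ssubsets, (-1 : ℂ) ^ A.card • qreduce A ρ

lemma properMarginalSum_eq :
    properMarginalSum ρ = (-1 : ℂ) ^ (n + 1) • ρ + spinFlipMatrix ρ := by
  have hsplit := Finset.sum_erase_add Finset.univ
    (fun A : Finset (Fin n) => (-1 : ℂ) ^ A.card • qreduce A ρ) (Finset.mem_univ Finset.univ)
  rw [sum_neg_one_pow_card_smul_qreduce, qreduce_univ, Finset.card_fin] at hsplit
  rw [← hsplit, properMarginalSum, Finset.ssubsets, Finset.powerset_univ, pow_succ]
  module

end Qubits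

lemma properMarginalSum_three (ρ : Matrix (Fin 3 → Bool) (Fin 3 → Bool) ℂ) :
    properMarginalSum ρ = ρ.trace • 1 - qreduce {0} ρ - qreduce {1} ρ - qreduce {2} ρ
      + qreduce {0, 1} ρ + qreduce {0, 2} ρ + qreduce {1, 2} ρ := by
  have hsubsets : (Finset.univ : Finset (Fin 3)).ssubsets =
      {∅, {0}, {1}, {2}, {0, 1}, {0, 2}, {1, 2}} := by decide
  rw [properMarginalSum, hsubsets]
  repeat rw [Finset.sum_insert (by decide)]
  simp [sub_eq_add_neg, add_assoc]

theorem stmt_12_general {n : ℕ} (ρ : Matrix (Fin n → Bool) (Fin n → Bool) ℂ)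
    (Φ Ψ : (Fin n → Bool) → ℂ) :
    star Φ ⬝ᵥ properMarginalSum ρ *ᵥ Ψ =
      (-1) ^ (n + 1) * (star Φ ⬝ᵥ ρ *ᵥ Ψ) +
        star (universalNot Ψ) ⬝ᵥ ρ *ᵥ universalNot Φ := by
  rw [properMarginalSum_eq, Matrix.add_mulVec, dotProduct_add, Matrix.smul_mulVec,
    dotProduct_smul, smul_eq_mul, star_universalNot_dotProduct_mulVec]

/-- equation (32) of the paper.  For a three-qubit density matrix `ρ`
with `Δ = 1 - ρ_1 - ρ_2 - ρ_3 + ρ_{12} + ρ_{13} + ρ_{23}` and the universal-NOT map `τ`,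
`⟨Ψ, ΔΨ⟩ = ⟨Ψ, ρΨ⟩ + ⟨τΨ, ρ(τΨ)⟩` for every `Ψ ∈ ℂ⁸`. -/
theorem stmt_12 (ρ : Matrix (Fin 3 → Bool) (Fin 3 → Bool) ℂ)
    (hpsd : ρ.PosSemidef) (htr : ρ.trace = 1)
    (Δ : Matrix (Fin 3 → Bool) (Fin 3 → Bool) ℂ)
    (hΔ : Δ = 1 - qreduce {0} ρ - qreduce {1} ρ - qreduce {2} ρ
        + qreduce {0, 1} ρ + qreduce {0, 2} ρ + qreduce {1, 2} ρ)
    (Ψ : (Fin 3 → Bool) → ℂ) :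
    star Ψ ⬝ᵥ Δ.mulVec Ψ
      = star Ψ ⬝ᵥ ρ.mulVec Ψ + star (tau3 Ψ) ⬝ᵥ ρ.mulVec (tau3 Ψ) := by
  rw [hΔ, tau3_eq_universalNot, ← one_smul ℂ (1 : Matrix _ _ ℂ), ← htr, ← properMarginalSum_three]
  simpa [Even.neg_one_pow (by decide : Even 4)] using stmt_12_general ρ Ψ Ψ
end
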